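/- Let q ∈ 𝒫 with 1 < q⁻ ≤ q⁺ < ∞, let α : ℝⁿ → ℝ be measurable, and let λ = {λ_{v,m}}_{v∈ℕ₀,m∈ℤⁿ} be a double sequence of complex numbers. Suppose that ‖λ‖'_{b̃^{−α(·),q'(·)}_{q'(·),q'(·)}} ≤ 1 and that for every dyadic cube P with |P| ≤ 1 the quantity ∫_P |P|^{−1} Σ_{v=v_P}^∞ Σ_{m∈ℤⁿ} 2^{v(−α(x)+n/2)q'(x)} |λ_{v,m}|^{q'(x)} χ_{v,m}(x) dx is finite. Then for every dyadic cube P with |P| ≤ 1 one has ∫_P |P|^{−1} Σ_{v=v_P}^∞ Σ_{m∈ℤⁿ} 2^{v(−α(x)+n/2)q'(x)} |λ_{v,m}|^{q'(x)} χ_{v,m}(x) dx ≤ 1. -/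

import Mathlib

/-!
The argument is an extremal choice of test sequence, applied to a truncation of `λ`.

Suppose the dual modular at some cube `P₀` exceeds `1`. By monotone convergence finitely many
generations `S` suffice (`exists_finset_one_lt`); cutting everything down to `S` and to the points
of `P₀` makes the modulars bounded over *all* cubes (`exists_cutModular_le`). This truncation is
needed because the hypothesis only gives finiteness cube by cube. Let `1 < M < ∞` be the supremum of
the cut-off modulars. The sequence
`s_{v,m} = conj(sgn λ_{v,m}) 2^{v(-α+n/2)q'} |λ_{v,m}|^{q'-1} M^{-1/q}` satisfies
`(2^{v(α-n/2)} |s_{v,m}|)^q = 2^{v(-α+n/2)q'} |λ_{v,m}|^{q'} / M` because `(q'-1) q = q'`, hence has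
`‖s‖* ≤ 1` (`starNorm_testSeq_le`). Pairing it with `λ` over a cube `P` yields at least `M^{-1/q⁻}`
times the cut-off modular at `P` (`le_pairing`). Since `M^{1/q⁻} < M`, some cube has cut-off modular
larger than `M^{1/q⁻}`, so the pairing there exceeds `1`, contradicting the bound on the conjugate
norm.
-/

noncomputable section
open MeasureTheory ENNReal Set
open scoped ENNReal

abbrev Rn (n : ℕ) := EuclideanSpace ℝ (Fin n)

/-- The dyadic cube `Q_{v,m}` (with `v ∈ ℕ₀`, so `|Q_{v,m}| = 2^{-vn} ≤ 1`). -/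
def dyadicCube (n : ℕ) (v : ℕ) (m : Fin n → ℤ) : Set (Rn n) :=
  {x | ∀ i, (m i : ℝ) ≤ 2 ^ v * x i ∧ 2 ^ v * x i < m i + 1}

/-- The variable-exponent modular `ϱ_{p(·)}`. -/
def modularVE (n : ℕ) (p : Rn n → ℝ) (f : Rn n → ℝ≥0∞) : ℝ≥0∞ :=
  ∫⁻ x, f x ^ p x

/-- The Luxemburg norm `‖·‖_{p(·)}`. -/
def luxNorm (n : ℕ) (p : Rn n → ℝ) (f : Rn n → ℝ≥0∞) : ℝ≥0∞ :=
  sInf {μ : ℝ≥0∞ | 0 < μ ∧ modularVE n p (fun x => f x / μ) ≤ 1}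

/-- The sequence space norm `‖λ‖_{b̃^{β(·),r(·)}_{r(·),r(·)}}`; here `|P|^{-1} = 2^{vP·n}`. -/
def btNorm (n : ℕ) (r β : Rn n → ℝ) (lam : ℕ → (Fin n → ℤ) → ℂ) : ℝ≥0∞ :=
  ⨆ (vP : ℕ) (m0 : Fin n → ℤ),
    luxNorm n r ((dyadicCube n vP m0).indicator fun x =>
      ((2 : ℝ≥0∞) ^ ((vP : ℝ) * n) *
        ∑' (v : ℕ), ∑' (m : Fin n → ℤ),
          (if vP ≤ v then (1 : ℝ≥0∞) else 0) *
            (2 : ℝ≥0∞) ^ ((v : ℝ) * (β x + n / 2) * r x) *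
              ENNReal.ofReal ‖lam v m‖ ^ r x *
                (dyadicCube n v m).indicator (fun _ => (1 : ℝ≥0∞)) x) ^ (1 / r x))

/-- The norm `‖s‖* = ‖s‖^⋆_{b̃^{α(·)-n,q(·)}_{q(·),q(·)}}` of a sequence of functions
`s = {s_{v,m}}`:
`sup_P ‖ x ↦ ( |P|^{-1} Σ_{v≥v_P} (Σ_m 2^{v(α(x)-n/2)}|s_{v,m}(x)| χ_{v,m}(x))^{q(x)} )^{1/q(x)} χ_P ‖_{q(·)}`. -/
def starNorm (n : ℕ) (q α : Rn n → ℝ) (s : ℕ → (Fin n → ℤ) → Rn n → ℂ) : ℝ≥0∞ :=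
  ⨆ (vP : ℕ) (m0 : Fin n → ℤ),
    luxNorm n q ((dyadicCube n vP m0).indicator fun x =>
      ((2 : ℝ≥0∞) ^ ((vP : ℝ) * n) *
        ∑' (v : ℕ), (if vP ≤ v then (1 : ℝ≥0∞) else 0) *
          (∑' (m : Fin n → ℤ),
            (2 : ℝ≥0∞) ^ ((v : ℝ) * (α x - n / 2)) * ENNReal.ofReal ‖s v m x‖ *
              (dyadicCube n v m).indicator (fun _ => (1 : ℝ≥0∞)) x) ^ q x) ^ (1 / q x))

/-- The conjugate norm `‖λ‖'_{b̃^{-α(·),q'(·)}_{q'(·),q'(·)}}`: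
`sup |∫_P |P|^{-1} Σ_{v≥v_P} Σ_m λ_{v,m} s_{v,m}(x) χ_{v,m}(x) dx|`, the supremum over all
dyadic cubes `P` with `|P| ≤ 1` and all measurable sequences `s` with `‖s‖* ≤ 1`. -/
def conjNorm (n : ℕ) (q α : Rn n → ℝ) (lam : ℕ → (Fin n → ℤ) → ℂ) : ℝ≥0∞ :=
  ⨆ (vP : ℕ) (m0 : Fin n → ℤ) (s : ℕ → (Fin n → ℤ) → Rn n → ℂ)
    (_ : (∀ v m, Measurable (s v m)) ∧ starNorm n q α s ≤ 1),
    ENNReal.ofReal ‖∫ x in dyadicCube n vP m0,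
      ((2 : ℂ) ^ (vP * n) *
        ∑' (v : ℕ), ∑' (m : Fin n → ℤ),
          (if vP ≤ v then (1 : ℂ) else 0) * lam v m * s v m x *
            (dyadicCube n v m).indicator (fun _ => (1 : ℂ)) x)‖

/-- `∫_P |P|^{-1} Σ_{v≥v_P} Σ_m 2^{v(-α(x)+n/2)q'(x)} |λ_{v,m}|^{q'(x)} χ_{v,m}(x) dx`,
where `q'` is the pointwise conjugate exponent of `q`. -/
def dualModular (n : ℕ) (q α : Rn n → ℝ) (lam : ℕ → (Fin n → ℤ) → ℂ)
    (vP : ℕ) (m0 : Fin n → ℤ) : ℝ≥0∞ :=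
  ∫⁻ x in dyadicCube n vP m0,
    (2 : ℝ≥0∞) ^ ((vP : ℝ) * n) *
      ∑' (v : ℕ), ∑' (m : Fin n → ℤ),
        (if vP ≤ v then (1 : ℝ≥0∞) else 0) *
          (2 : ℝ≥0∞) ^ ((v : ℝ) * (-α x + n / 2) * (q x / (q x - 1))) *
            ENNReal.ofReal ‖lam v m‖ ^ (q x / (q x - 1)) *
              (dyadicCube n v m).indicator (fun _ => (1 : ℝ≥0∞)) x

/-! ### Dyadic cubes of one generation -/

/-- The index `m` of the unique dyadic cube of generation `v` containing `x`. -/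
def cubeIdx {n : ℕ} (v : ℕ) (x : Rn n) : Fin n → ℤ := fun i => ⌊(2 : ℝ) ^ v * x i⌋

lemma mem_dyadicCube_iff {n : ℕ} (v : ℕ) (m : Fin n → ℤ) (x : Rn n) :
    x ∈ dyadicCube n v m ↔ m = cubeIdx v x := by
  simp only [dyadicCube, mem_ofPred_eq, cubeIdx, funext_iff]
  refine forall_congr' fun i => ?_
  rw [eq_comm, Int.floor_eq_iff]

@[fun_prop]
lemma measurable_cubeIdx {n : ℕ} (v : ℕ) : Measurable (cubeIdx (n := n) v) := by
  unfold cubeIdx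
  refine measurable_pi_lambda _ fun i => ?_
  refine Int.measurable_floor.comp ?_
  fun_prop

lemma measurableSet_dyadicCube {n : ℕ} (v : ℕ) (m : Fin n → ℤ) :
    MeasurableSet (dyadicCube n v m) := by
  have : dyadicCube n v m = cubeIdx v ⁻¹' {m} := by
    ext x
    simp only [mem_dyadicCube_iff, mem_preimage, mem_singleton_iff, eq_comm]
  rw [this]
  exact measurable_cubeIdx v (measurableSet_singleton m)

/-- The cubes of one generation partition space, so a sum over them has a single nonzero term. -/
lemma tsum_cube {n : ℕ} {R : Type*} [Semiring R] [TopologicalSpace R] (v : ℕ)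
    (x : Rn n) (g : (Fin n → ℤ) → R) :
    ∑' m, g m * (dyadicCube n v m).indicator (fun _ => (1 : R)) x = g (cubeIdx v x) := by
  rw [tsum_eq_single (cubeIdx v x)]
  · rw [indicator_of_mem ((mem_dyadicCube_iff _ _ _).2 rfl), mul_one]
  · intro m hm
    rw [indicator_of_notMem (fun h => hm ((mem_dyadicCube_iff _ _ _).1 h)), mul_zero]

lemma two_rpow_ofReal (r : ℝ) : (2 : ℝ≥0∞) ^ r = ENNReal.ofReal ((2 : ℝ) ^ r) := by
  rw [← ENNReal.ofReal_rpow_of_pos (by norm_num)]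
  simp

/-! ### The dual modular and its truncation -/

/-- The summand of generation `v` of the dual modular: with `m` the index of the cube of
generation `v` containing `x`, this is `2^{v(-α(x)+n/2)q'(x)} |λ_{v,m}|^{q'(x)}`. -/
def dualTerm {n : ℕ} (q α : Rn n → ℝ) (lam : ℕ → (Fin n → ℤ) → ℂ) (v : ℕ) (x : Rn n) : ℝ :=
  (2 : ℝ) ^ ((v : ℝ) * (-α x + n / 2) * (q x / (q x - 1))) *
    ‖lam v (cubeIdx v x)‖ ^ (q x / (q x - 1))

lemma dualTerm_nonneg {n : ℕ} (q α : Rn n → ℝ) (lam : ℕ → (Fin n → ℤ) → ℂ) (v : ℕ) (x : Rn n) :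
    0 ≤ dualTerm q α lam v x := by unfold dualTerm; positivity

lemma measurable_dualTerm {n : ℕ} {q α : Rn n → ℝ} (hq : Measurable q) (hα : Measurable α)
    (lam : ℕ → (Fin n → ℤ) → ℂ) (v : ℕ) : Measurable (dualTerm q α lam v) := by
  have := measurable_of_countable (lam v)
  unfold dualTerm
  fun_prop

lemma dualModular_eq {n : ℕ} (q α : Rn n → ℝ) (hq1 : ∀ x, 1 ≤ q x)
    (lam : ℕ → (Fin n → ℤ) → ℂ) (vP : ℕ) (m0 : Fin n → ℤ) :
    dualModular n q α lam vP m0 = ∫⁻ x in dyadicCube n vP m0,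
      (2 : ℝ≥0∞) ^ ((vP : ℝ) * n) *
        ∑' v : ℕ, if vP ≤ v then ENNReal.ofReal (dualTerm q α lam v x) else 0 := by
  unfold dualModular
  refine lintegral_congr fun x => ?_
  congr 1
  refine tsum_congr fun v => ?_
  rw [tsum_cube v x (fun m => (if vP ≤ v then (1 : ℝ≥0∞) else 0) *
          (2 : ℝ≥0∞) ^ ((v : ℝ) * (-α x + n / 2) * (q x / (q x - 1))) *
            ENNReal.ofReal ‖lam v m‖ ^ (q x / (q x - 1)))]
  split_ifs
  · have h0 : 0 ≤ q x / (q x - 1) := div_nonneg (by linarith [hq1 x]) (by linarith [hq1 x])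
    rw [one_mul, two_rpow_ofReal, ENNReal.ofReal_rpow_of_nonneg (norm_nonneg _) h0,
      ← ENNReal.ofReal_mul (by positivity), dualTerm]
  · simp

/-- `dualTerm` cut down to the generations in `S` and the points of `P₀`. -/
def cutTerm {n : ℕ} (q α : Rn n → ℝ) (lam : ℕ → (Fin n → ℤ) → ℂ) (S : Finset ℕ)
    (P₀ : Set (Rn n)) (v : ℕ) (x : Rn n) : ℝ :=
  if v ∈ S then P₀.indicator (dualTerm q α lam v) x else 0

/-- The dual modular at the cube `Q_{vP,m0}` built from `cutTerm`. -/
def cutModular {n : ℕ} (q α : Rn n → ℝ) (lam : ℕ → (Fin n → ℤ) → ℂ) (S : Finset ℕ)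
    (P₀ : Set (Rn n)) (vP : ℕ) (m0 : Fin n → ℤ) : ℝ≥0∞ :=
  ∫⁻ x in dyadicCube n vP m0, (2 : ℝ≥0∞) ^ ((vP : ℝ) * n) *
    ∑' v : ℕ, if vP ≤ v then ENNReal.ofReal (cutTerm q α lam S P₀ v x) else 0

/-! ### The extremal test sequence -/

/-- The extremal test sequence for the cut-off `λ`, normalised by the constant `M`:
`conj(sgn λ_{v,m}) 2^{v(-α+n/2)q'} |λ_{v,m}|^{q'-1} M^{-1/q}`. It is independent of `m`, since
only the cube containing `x` matters. The factor `|λ|⁻¹` of the sign is `0` when `λ` vanishes. -/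
def testSeq {n : ℕ} (q α : Rn n → ℝ) (lam : ℕ → (Fin n → ℤ) → ℂ) (S : Finset ℕ)
    (P₀ : Set (Rn n)) (M : ℝ) (v : ℕ) (_ : Fin n → ℤ) (x : Rn n) : ℂ :=
  if v ∈ S then P₀.indicator (fun x =>
    starRingEnd ℂ (lam v (cubeIdx v x)) * ((‖lam v (cubeIdx v x)‖⁻¹ *
      ((2 : ℝ) ^ ((v : ℝ) * (-α x + n / 2) * (q x / (q x - 1))) *
        ‖lam v (cubeIdx v x)‖ ^ (q x / (q x - 1) - 1) * M ^ (-(1 / q x))) : ℝ) : ℂ)) x else 0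

section
variable {n : ℕ} {q α : Rn n → ℝ} {lam : ℕ → (Fin n → ℤ) → ℂ} {S : Finset ℕ} {P₀ : Set (Rn n)}

lemma cutTerm_nonneg (v : ℕ) (x : Rn n) : 0 ≤ cutTerm q α lam S P₀ v x := by
  unfold cutTerm
  split_ifs
  · exact indicator_nonneg (fun y _ => dualTerm_nonneg q α lam v y) x
  · exact le_rfl

lemma measurable_cutTerm (hq : Measurable q) (hα : Measurable α) (hP : MeasurableSet P₀)
    (v : ℕ) : Measurable (cutTerm q α lam S P₀ v) := by
  unfold cutTerm
  split_ifs
  · exact (measurable_dualTerm hq hα lam v).indicator hP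
  · exact measurable_const

lemma measurable_testSeq (hq : Measurable q) (hα : Measurable α) (hP : MeasurableSet P₀)
    (M : ℝ) (v : ℕ) (m : Fin n → ℤ) : Measurable (testSeq q α lam S P₀ M v m) := by
  unfold testSeq
  split_ifs
  · refine Measurable.indicator ?_ hP
    have h1 := measurable_of_countable (lam v)
    have h2 : Measurable (starRingEnd ℂ) := Complex.continuous_conj.measurable
    fun_prop
  · exact measurable_const

/-- The identity `(q'-1) q = q'`: the weighted `q`-th power of the test sequence is the cut-off
summand divided by `M`. -/
lemma testSeq_pow {M : ℝ} (hM : 0 < M) (v : ℕ) (m : Fin n → ℤ) {x : Rn n} (hx : 1 < q x) :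
    ((2 : ℝ≥0∞) ^ ((v : ℝ) * (α x - n / 2)) * ENNReal.ofReal ‖testSeq q α lam S P₀ M v m x‖)
      ^ q x = (ENNReal.ofReal M)⁻¹ * ENNReal.ofReal (cutTerm q α lam S P₀ v x) := by
  have hq0 : 0 < q x := by linarith
  have hq1 : q x - 1 ≠ 0 := by linarith
  rw [two_rpow_ofReal, ← ENNReal.ofReal_mul (by positivity),
    ENNReal.ofReal_rpow_of_nonneg (by positivity) hq0.le, ← ENNReal.ofReal_inv_of_pos hM,
    ← ENNReal.ofReal_mul (by positivity)]
  congr 1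
  unfold testSeq cutTerm
  split_ifs
  swap
  · simp [Real.zero_rpow hq0.ne']
  by_cases hxP : x ∈ P₀
  swap
  · simp [indicator_of_notMem hxP, Real.zero_rpow hq0.ne']
  rw [indicator_of_mem hxP, indicator_of_mem hxP, dualTerm]
  set l := lam v (cubeIdx v x)
  have hp : 0 < q x / (q x - 1) := div_pos hq0 (by linarith)
  rcases eq_or_ne l 0 with hl | hl
  · simp [hl, Real.zero_rpow hq0.ne', Real.zero_rpow hp.ne']
  have hl' : 0 < ‖l‖ := norm_pos_iff.2 hl
  rw [norm_mul, RCLike.norm_conj, Complex.norm_real, Real.norm_of_nonneg (by positivity),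
    mul_inv_cancel_left₀ hl'.ne']
  rw [Real.mul_rpow (by positivity) (by positivity), Real.mul_rpow (by positivity) (by positivity),
    Real.mul_rpow (by positivity) (by positivity), ← Real.rpow_mul (by norm_num),
    ← Real.rpow_mul (by norm_num), ← Real.rpow_mul hl'.le, ← Real.rpow_mul hM.le]
  have e1 : (q x / (q x - 1) - 1) * q x = q x / (q x - 1) := by field_simp; ring
  have e2 : -(1 / q x) * q x = -1 := by field_simp
  rw [e1, e2, Real.rpow_neg_one]
  rw [← mul_assoc, ← mul_assoc, ← Real.rpow_add (by norm_num)]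
  have e3 : (v : ℝ) * (α x - n / 2) * q x + v * (-α x + n / 2) * (q x / (q x - 1)) * q x
      = v * (-α x + n / 2) * (q x / (q x - 1)) := by field_simp; ring
  rw [e3]
  ring

/-- The product with `λ` is real and nonnegative, so no cancellation occurs in the pairing. -/
lemma lam_mul_testSeq (M : ℝ) (v : ℕ) {x : Rn n} (hx : 1 < q x) :
    lam v (cubeIdx v x) * testSeq q α lam S P₀ M v (cubeIdx v x) x =
      ((M ^ (-(1 / q x)) * cutTerm q α lam S P₀ v x : ℝ) : ℂ) := by
  unfold testSeq cutTerm
  split_ifs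
  swap
  · simp
  by_cases hxP : x ∈ P₀
  swap
  · simp [indicator_of_notMem hxP]
  rw [indicator_of_mem hxP, indicator_of_mem hxP, dualTerm]
  set l := lam v (cubeIdx v x)
  have hp : 0 < q x / (q x - 1) := div_pos (by linarith) (by linarith)
  rcases eq_or_ne l 0 with hl | hl
  · simp [hl, Real.zero_rpow hp.ne']
  have hl' : 0 < ‖l‖ := norm_pos_iff.2 hl
  rw [← mul_assoc, Complex.mul_conj, Complex.normSq_eq_norm_sq, ← Complex.ofReal_mul,
    Real.rpow_sub_one hl'.ne']
  congr 1
  field_simp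

/-- The test sequence is admissible as soon as `M` dominates all cut-off modulars. -/
lemma starNorm_testSeq_le {M : ℝ} (hM : 0 < M) (hq : ∀ᵐ x, 1 < q x)
    (h : ∀ vP m0, cutModular q α lam S P₀ vP m0 ≤ ENNReal.ofReal M) :
    starNorm n q α (testSeq q α lam S P₀ M) ≤ 1 := by
  refine iSup_le fun vP => iSup_le fun m0 => sInf_le ⟨one_pos, ?_⟩
  have hM0 : ENNReal.ofReal M ≠ 0 := by simpa using hM
  unfold modularVE
  calc _ = ∫⁻ x, (dyadicCube n vP m0).indicator (fun x => (ENNReal.ofReal M)⁻¹ *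
        ((2 : ℝ≥0∞) ^ ((vP : ℝ) * n) *
        ∑' v : ℕ, if vP ≤ v then ENNReal.ofReal (cutTerm q α lam S P₀ v x) else 0)) x := by
        refine lintegral_congr_ae ?_
        filter_upwards [hq] with x hx
        have hq0 : 0 < q x := by linarith
        rw [div_one]
        by_cases hxP : x ∈ dyadicCube n vP m0
        · rw [indicator_of_mem hxP, indicator_of_mem hxP, ← ENNReal.rpow_mul,
            one_div_mul_cancel hq0.ne', ENNReal.rpow_one, mul_left_comm]
          congr 1
          rw [← ENNReal.tsum_mul_left]
          refine tsum_congr fun v => ?_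
          rw [tsum_cube v x (fun m => (2 : ℝ≥0∞) ^ ((v : ℝ) * (α x - n / 2)) *
            ENNReal.ofReal ‖testSeq q α lam S P₀ M v m x‖), testSeq_pow hM v _ hx]
          split_ifs <;> simp
        · rw [indicator_of_notMem hxP, indicator_of_notMem hxP, ENNReal.zero_rpow_of_pos hq0]
    _ = (ENNReal.ofReal M)⁻¹ * cutModular q α lam S P₀ vP m0 := by
        rw [lintegral_indicator (measurableSet_dyadicCube _ _), lintegral_const_mul' _ _
          (ENNReal.inv_ne_top.2 hM0)]
        rfl
    _ ≤ (ENNReal.ofReal M)⁻¹ * ENNReal.ofReal M := by gcongr; exact h _ _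
    _ = 1 := ENNReal.inv_mul_cancel hM0 ENNReal.ofReal_ne_top

lemma tsum_cut (vP : ℕ) (x : Rn n) :
    (∑' v : ℕ, if vP ≤ v then ENNReal.ofReal (cutTerm q α lam S P₀ v x) else 0)
      = ENNReal.ofReal (∑ v ∈ S, if vP ≤ v then cutTerm q α lam S P₀ v x else 0) := by
  rw [ENNReal.ofReal_sum_of_nonneg, tsum_eq_sum]
  · refine Finset.sum_congr rfl fun v _ => ?_
    split_ifs <;> simp
  · intro v hv
    simp [cutTerm, hv]
  · intro v _
    split_ifs
    exacts [cutTerm_nonneg v x, le_rfl]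

/-- Pairing `λ` with the test sequence gives at least `M^{-1/q⁻}` times the cut-off modular. -/
lemma le_pairing {M qm : ℝ} (hM : 1 ≤ M) (hqm : 1 < qm) (hq : ∀ᵐ x, qm ≤ q x)
    (hqmeas : Measurable q) (hα : Measurable α) (hP : MeasurableSet P₀)
    (vP : ℕ) (m0 : Fin n → ℤ) (hfin : cutModular q α lam S P₀ vP m0 ≠ ⊤) :
    ENNReal.ofReal (M ^ (-(1 / qm))) * cutModular q α lam S P₀ vP m0 ≤
    ENNReal.ofReal ‖∫ x in dyadicCube n vP m0,
      ((2 : ℂ) ^ (vP * n) *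
        ∑' (v : ℕ), ∑' (m : Fin n → ℤ),
          (if vP ≤ v then (1 : ℂ) else 0) * lam v m * testSeq q α lam S P₀ M v m x *
            (dyadicCube n v m).indicator (fun _ => (1 : ℂ)) x)‖ := by
  set R : Rn n → ℝ := fun x => (2 : ℝ) ^ ((vP : ℝ) * n) *
    ∑ v ∈ S, if vP ≤ v then cutTerm q α lam S P₀ v x else 0 with hR
  have hR0 : ∀ x, 0 ≤ R x := fun x => by
    refine mul_nonneg (by positivity) (Finset.sum_nonneg fun v _ => ?_)
    split_ifs
    exacts [cutTerm_nonneg v x, le_rfl]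
  have hRm : Measurable R := by
    refine Measurable.const_mul (Finset.measurable_sum _ fun v _ => ?_) _
    split_ifs
    exacts [measurable_cutTerm hqmeas hα hP v, measurable_const]
  have hcut : cutModular q α lam S P₀ vP m0 = ∫⁻ x in dyadicCube n vP m0, ENNReal.ofReal (R x) := by
    unfold cutModular
    refine lintegral_congr fun x => ?_
    rw [tsum_cut, two_rpow_ofReal, ← ENNReal.ofReal_mul (by positivity)]
  have hM0 : 0 < M := by linarith
  have hint : (∫ x in dyadicCube n vP m0,
      ((2 : ℂ) ^ (vP * n) *
        ∑' (v : ℕ), ∑' (m : Fin n → ℤ),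
          (if vP ≤ v then (1 : ℂ) else 0) * lam v m * testSeq q α lam S P₀ M v m x *
            (dyadicCube n v m).indicator (fun _ => (1 : ℂ)) x))
      = ((∫ x in dyadicCube n vP m0, M ^ (-(1 / q x)) * R x : ℝ) : ℂ) := by
    rw [← integral_complex_ofReal]
    refine integral_congr_ae (ae_restrict_of_ae ?_)
    filter_upwards [hq] with x hx
    have hx1 : 1 < q x := by linarith
    have h1 : ∀ v : ℕ, (∑' (m : Fin n → ℤ),
          (if vP ≤ v then (1 : ℂ) else 0) * lam v m * testSeq q α lam S P₀ M v m x *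
            (dyadicCube n v m).indicator (fun _ => (1 : ℂ)) x)
        = ((M ^ (-(1 / q x)) * (if vP ≤ v then cutTerm q α lam S P₀ v x else 0) : ℝ) : ℂ) := by
      intro v
      rw [tsum_cube v x (fun m => (if vP ≤ v then (1 : ℂ) else 0) * lam v m *
        testSeq q α lam S P₀ M v m x), mul_assoc, lam_mul_testSeq M v hx1]
      split_ifs <;> simp
    simp_rw [h1]
    rw [tsum_eq_sum (s := S) (by intro v hv; simp [cutTerm, hv]), ← Complex.ofReal_sum,
      ← Finset.mul_sum, hR]
    have h2 : (2 : ℂ) ^ (vP * n) = (((2 : ℝ) ^ ((vP : ℝ) * n) : ℝ) : ℂ) := by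
      rw [← Nat.cast_mul, Real.rpow_natCast]; push_cast; rfl
    rw [h2, ← Complex.ofReal_mul]
    congr 1
    ring
  have hRi : Integrable R (volume.restrict (dyadicCube n vP m0)) := by
    refine ⟨hRm.aestronglyMeasurable, ?_⟩
    rw [hasFiniteIntegral_iff_ofReal (.of_forall hR0), ← hcut]
    exact hfin.lt_top
  have hle : ∀ᵐ x ∂(volume.restrict (dyadicCube n vP m0)), M ^ (-(1 / q x)) ≤ 1 := by
    refine ae_restrict_of_ae ?_
    filter_upwards [hq] with x hx
    exact Real.rpow_le_one_of_one_le_of_nonpos hM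
      (neg_nonpos.2 (one_div_nonneg.2 (by linarith)))
  have hi : Integrable (fun x => M ^ (-(1 / q x)) * R x)
      (volume.restrict (dyadicCube n vP m0)) := by
    refine hRi.mono (Measurable.aestronglyMeasurable (by fun_prop)) ?_
    filter_upwards [hle] with x hx
    rw [norm_mul, Real.norm_of_nonneg (Real.rpow_nonneg hM0.le _)]
    exact mul_le_of_le_one_left (norm_nonneg _) hx
  rw [hint, Complex.norm_real, Real.norm_of_nonneg (integral_nonneg fun x =>
      mul_nonneg (Real.rpow_nonneg hM0.le _) (hR0 x)), hcut,
    ← ofReal_integral_eq_lintegral_ofReal hRi (.of_forall hR0),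
    ← ENNReal.ofReal_mul (by positivity), ← integral_const_mul]
  refine ENNReal.ofReal_le_ofReal (integral_mono_ae (hRi.const_mul _) hi ?_)
  refine ae_restrict_of_ae ?_
  filter_upwards [hq] with x hx
  refine mul_le_mul_of_nonneg_right (Real.rpow_le_rpow_of_exponent_le hM ?_) (hR0 x)
  exact neg_le_neg (one_div_le_one_div_of_le (by linarith) hx)

/-! ### Bounds for the truncated modulars -/

/-- If all generations in `S` are at least that of `P₀`, the cut-off modulars are bounded
uniformly over all cubes: a cube of generation beyond `S` contributes nothing, and for the others
`|P|⁻¹` is bounded. -/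
lemma exists_cutModular_le (hq1 : ∀ x, 1 ≤ q x) (vP : ℕ) (m0 : Fin n → ℤ)
    (hS : ∀ v ∈ S, vP ≤ v) (hfin : dualModular n q α lam vP m0 < ⊤) :
    ∃ C : ℝ≥0∞, C ≠ ⊤ ∧ ∀ v' m', cutModular q α lam S (dyadicCube n vP m0) v' m' ≤ C := by
  refine ⟨(2 : ℝ≥0∞) ^ (((S.sup id : ℕ) : ℝ) * n) * dualModular n q α lam vP m0,
    ENNReal.mul_ne_top (by rw [two_rpow_ofReal]; exact ENNReal.ofReal_ne_top) hfin.ne, ?_⟩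
  intro v' m'
  rw [dualModular_eq q α hq1]
  unfold cutModular
  rw [← lintegral_const_mul' _ _ (by rw [two_rpow_ofReal]; exact ENNReal.ofReal_ne_top),
    ← lintegral_indicator (measurableSet_dyadicCube vP m0)]
  refine (setLIntegral_le_lintegral _ _).trans (lintegral_mono fun x => ?_)
  by_cases hx : x ∈ dyadicCube n vP m0
  swap
  · simp [cutTerm, indicator_of_notMem hx]
  simp only [indicator_of_mem hx]
  by_cases hv' : v' ≤ S.sup id
  · refine mul_le_mul' (ENNReal.rpow_le_rpow_of_exponent_le (by norm_num) (by gcongr)) ?_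
    refine le_trans (ENNReal.tsum_le_tsum fun v => ?_) (le_mul_of_one_le_left' ?_)
    · by_cases hv : v ∈ S
      · simp only [hS v hv, if_true, cutTerm, hv, indicator_of_mem hx]
        split_ifs <;> simp
      · simp [cutTerm, hv]
    · rw [two_rpow_ofReal, ENNReal.one_le_ofReal]
      exact Real.one_le_rpow (by norm_num) (by positivity)
  · refine le_of_eq_of_le ?_ zero_le
    rw [mul_eq_zero]
    right
    rw [ENNReal.tsum_eq_zero]
    intro v
    split_ifs with h
    · have : v ∉ S := fun hv => hv' (h.trans (Finset.le_sup (f := id) hv))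
      simp [cutTerm, this]
    · rfl

/-- A dual modular exceeding `1` is already detected by finitely many generations. -/
lemma exists_finset_one_lt (hq1 : ∀ x, 1 ≤ q x) (hqmeas : Measurable q) (hα : Measurable α)
    (vP : ℕ) (m0 : Fin n → ℤ) (h : 1 < dualModular n q α lam vP m0) :
    ∃ S : Finset ℕ, (∀ v ∈ S, vP ≤ v) ∧
      1 < cutModular q α lam S (dyadicCube n vP m0) vP m0 := by
  have hmeas : ∀ v : ℕ, Measurable fun x : Rn n =>
      if vP ≤ v then ENNReal.ofReal (dualTerm q α lam v x) else 0 := fun v => by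
    split_ifs
    exacts [(measurable_dualTerm hqmeas hα lam v).ennreal_ofReal, measurable_const]
  have h2 : (2 : ℝ≥0∞) ^ ((vP : ℝ) * n) ≠ ⊤ := by
    rw [two_rpow_ofReal]; exact ENNReal.ofReal_ne_top
  rw [dualModular_eq q α hq1, lintegral_const_mul' _ _ h2,
    lintegral_tsum (fun v => (hmeas v).aemeasurable), ← ENNReal.tsum_mul_left,
    ENNReal.tsum_eq_iSup_sum, lt_iSup_iff] at h
  obtain ⟨S, hS⟩ := h
  refine ⟨S.filter (vP ≤ ·), fun v hv => (Finset.mem_filter.1 hv).2, hS.trans_le ?_⟩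
  rw [← Finset.mul_sum, ← lintegral_finsetSum _ (fun v _ => hmeas v),
    ← lintegral_const_mul' _ _ h2]
  refine setLIntegral_mono' (measurableSet_dyadicCube _ _) fun x hx => ?_
  refine mul_le_mul_right (le_trans (Finset.sum_le_sum fun v hv => ?_)
    (ENNReal.sum_le_tsum S)) _
  split_ifs with hle
  · simp [cutTerm, hv, hle, indicator_of_mem hx]
  · rfl

end

/-- let `q ∈ 𝒫` with `1 < q⁻ ≤ q⁺ < ∞` and `α` measurable. If
`‖λ‖'_{b̃^{-α(·),q'(·)}_{q'(·),q'(·)}} ≤ 1` and for each dyadic cube `P` with `|P| ≤ 1` the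
modular `∫_P |P|^{-1} Σ_{v≥v_P} Σ_m 2^{v(-α+n/2)q'} |λ_{v,m}|^{q'} χ_{v,m} dx` is finite,
then this modular is `≤ 1` for every such `P`. -/
theorem statement10 (n : ℕ) (hn : 1 ≤ n) (q α : Rn n → ℝ)
    (hqmeas : Measurable q) (hαmeas : Measurable α)
    (hq1 : ∀ x, 1 ≤ q x)
    (qm qM : ℝ) (hqm : 1 < qm)
    (hq : ∀ᵐ x ∂(volume : Measure (Rn n)), qm ≤ q x ∧ q x ≤ qM)
    (lam : ℕ → (Fin n → ℤ) → ℂ)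
    (hconj : conjNorm n q α lam ≤ 1)
    (hfin : ∀ (vP : ℕ) (m0 : Fin n → ℤ), dualModular n q α lam vP m0 < ⊤) :
    ∀ (vP : ℕ) (m0 : Fin n → ℤ), dualModular n q α lam vP m0 ≤ 1 := by
  intro vP₀ m₀
  by_contra! hlt
  obtain ⟨S, hS, h1⟩ := exists_finset_one_lt hq1 hqmeas hαmeas vP₀ m₀ hlt
  obtain ⟨C, hC, hCle⟩ := exists_cutModular_le hq1 vP₀ m₀ hS (hfin vP₀ m₀)
  set P₀ := dyadicCube n vP₀ m₀
  set M : ℝ≥0∞ := ⨆ (v) (m), cutModular q α lam S P₀ v m with hMdef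
  have hle : ∀ v m, cutModular q α lam S P₀ v m ≤ M := fun v m =>
    le_iSup₂ (f := fun v m => cutModular q α lam S P₀ v m) v m
  have hMtop : M ≠ ⊤ := ne_top_of_le_ne_top hC (iSup₂_le hCle)
  have hM1 : 1 < M.toReal := by
    have := h1.trans_le (hle _ _)
    rw [← ENNReal.ofReal_toReal hMtop, ENNReal.one_lt_ofReal] at this
    exact this
  have hM0 : 0 < M.toReal := by linarith
  have hae : ∀ᵐ x, qm ≤ q x := hq.mono fun x hx => hx.1
  -- `M ^ (1 / q⁻) < M`, so the supremum `M` is nearly attained above that level.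
  have hlt' : ENNReal.ofReal (M.toReal ^ (1 / qm)) < M := by
    refine (ENNReal.ofReal_lt_iff_lt_toReal (by positivity) hMtop).2 ?_
    exact Real.rpow_lt_self_of_one_lt hM1 ((div_lt_one (by linarith)).2 hqm)
  rw [hMdef, lt_iSup_iff] at hlt'
  obtain ⟨v₁, hlt'⟩ := hlt'
  rw [lt_iSup_iff] at hlt'
  obtain ⟨m₁, hlt'⟩ := hlt'
  rw [← hMdef] at hlt'
  have hP := measurableSet_dyadicCube vP₀ m₀
  have hstar : starNorm n q α (testSeq q α lam S P₀ M.toReal) ≤ 1 :=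
    starNorm_testSeq_le hM0 (hae.mono fun x hx => hqm.trans_le hx)
      (fun v m => by rw [ENNReal.ofReal_toReal hMtop]; exact hle v m)
  have hpair := le_pairing (lam := lam) (S := S) hM1.le hqm hae hqmeas hαmeas hP v₁ m₁
    (ne_top_of_le_ne_top hMtop (hle v₁ m₁))
  have hone := (le_iSup₂_of_le v₁ m₁ (le_iSup₂_of_le (testSeq q α lam S P₀ M.toReal)
    ⟨fun v m => measurable_testSeq hqmeas hαmeas hP _ v m, hstar⟩ le_rfl)).trans hconj
  have hcontra := hpair.trans hone
  refine absurd hcontra (not_le.2 ?_)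
  have hpos : 0 < M.toReal ^ (-(1 / qm)) := Real.rpow_pos_of_pos hM0 _
  calc (1 : ℝ≥0∞) = ENNReal.ofReal (M.toReal ^ (-(1 / qm))) *
        ENNReal.ofReal (M.toReal ^ (1 / qm)) := by
        rw [← ENNReal.ofReal_mul hpos.le, ← Real.rpow_add hM0]; simp
    _ < _ := (ENNReal.mul_lt_mul_iff_right (by simpa using hpos) ENNReal.ofReal_ne_top).2 hlt'


end
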